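/- Let (\tilde{X}_1,...,\tilde{X}_n) be i.i.d. and let S, W be finite discrete random variables with S independent of \tilde{X}^n. Then H(W) \ge I(S,W; \tilde{X}^n) + I(S;W) and consequently \log|\mathcal{W}| \ge \sum_{i=1}^n I(S, W, \tilde{X}^{i-1}; \tilde{X}_i), where W takes values in \mathcal{W}. -/

import Mathlib

open Finset Real

noncomputable section

variable {Ω : Type} [Fintype Ω]

/-- Probability that `X = x` under the pmf `p` on the finite sample space `Ω`. -/
def pr {α : Type} [DecidableEq α] (p : Ω → ℝ) (X : Ω → α) (x : α) : ℝ :=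
  ∑ ω, if X ω = x then p ω else 0

/-- Shannon entropy (in nats) of a random variable `X`. -/
def ent {α : Type} [Fintype α] [DecidableEq α] (p : Ω → ℝ) (X : Ω → α) : ℝ :=
  ∑ x, Real.negMulLog (pr p X x)

/-- Conditional Shannon entropy `H(X | Y)`. -/
def condEnt {α β : Type} [Fintype α] [Fintype β] [DecidableEq α] [DecidableEq β]
    (p : Ω → ℝ) (X : Ω → α) (Y : Ω → β) : ℝ :=
  ent p (fun ω => (X ω, Y ω)) - ent p Y

/-- Mutual information `I(X; Y)`. -/
def mi {α β : Type} [Fintype α] [Fintype β] [DecidableEq α] [DecidableEq β]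
    (p : Ω → ℝ) (X : Ω → α) (Y : Ω → β) : ℝ :=
  ent p X + ent p Y - ent p (fun ω => (X ω, Y ω))

/-- Conditional mutual information `I(X; Y | Z)`. -/
def condMI {α β γ : Type} [Fintype α] [Fintype β] [Fintype γ]
    [DecidableEq α] [DecidableEq β] [DecidableEq γ]
    (p : Ω → ℝ) (X : Ω → α) (Y : Ω → β) (Z : Ω → γ) : ℝ :=
  condEnt p X Z - condEnt p X (fun ω => (Y ω, Z ω))

/-- `p` is a probability mass function. -/
def IsPMF (p : Ω → ℝ) : Prop := (∀ ω, 0 ≤ p ω) ∧ ∑ ω, p ω = 1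

/-- `X` and `Y` are independent random variables. -/
def IndepRV {α β : Type} [DecidableEq α] [DecidableEq β]
    (p : Ω → ℝ) (X : Ω → α) (Y : Ω → β) : Prop :=
  ∀ x y, pr p (fun ω => (X ω, Y ω)) (x, y) = pr p X x * pr p Y y

/-- `X` and `Y` are conditionally independent given `Z` (Markov chain `X - Z - Y`). -/
def CondIndep {α β γ : Type} [DecidableEq α] [DecidableEq β] [DecidableEq γ]
    (p : Ω → ℝ) (X : Ω → α) (Y : Ω → β) (Z : Ω → γ) : Prop :=
  ∀ x y z, pr p (fun ω => ((X ω, Y ω), Z ω)) ((x, y), z) * pr p Z z =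
    pr p (fun ω => (X ω, Z ω)) (x, z) * pr p (fun ω => (Y ω, Z ω)) (y, z)

/-- `X` is uniformly distributed on its (finite) alphabet. -/
def UniformRV {α : Type} [Fintype α] [DecidableEq α] (p : Ω → ℝ) (X : Ω → α) : Prop :=
  ∀ x, pr p X x = 1 / (Fintype.card α : ℝ)

/-!
Independence gives `H(S) + H(X^n) = H(S, X^n) ≤ H(S, W, X^n)`, which is the bound on `H(W)` once
the two mutual informations are written in terms of entropies. The chain rule
`I(T; X^n) = ∑ᵢ I(T, X^{i-1}; X_i)` holds for mutually independent coordinates because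
`∑ᵢ H(X_i) = H(X^n)`; the bound on `log |𝒲|` then follows from `I(S; W) ≥ 0` and
`H(W) ≤ log |𝒲|`. With indices starting at zero, the prefix `X^{i-1}` is `Fin.take i X`.
-/

/-- The coordinates of the random vector `X` are mutually independent: the law of `X` is the
product of its marginals. The coordinates may have different alphabets and different laws. -/
def IIndepRV {ι : Type} [Fintype ι] {α : ι → Type} [∀ i, DecidableEq (α i)]
    (p : Ω → ℝ) (X : Ω → ∀ i, α i) : Prop :=
  ∀ v, pr p X v = ∏ i, pr p (fun ω => X ω i) (v i)

section Probability

variable {α β : Type} [DecidableEq α] [DecidableEq β] {p : Ω → ℝ}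

lemma pr_nonneg (hp : ∀ ω, 0 ≤ p ω) (X : Ω → α) (x : α) : 0 ≤ pr p X x :=
  sum_nonneg fun ω _ => ite_nonneg (hp ω) le_rfl

lemma pr_apply_pos (hp : ∀ ω, 0 ≤ p ω) (X : Ω → α) {ω : Ω} (hω : 0 < p ω) :
    0 < pr p X (X ω) :=
  sum_pos' (fun ω' _ => ite_nonneg (hp ω') le_rfl) ⟨ω, mem_univ ω, by simpa using hω⟩

lemma pr_le_pr_comp (hp : ∀ ω, 0 ≤ p ω) (X : Ω → α) (f : α → β) (x : α) :
    pr p X x ≤ pr p (fun ω => f (X ω)) (f x) := by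
  refine sum_le_sum fun ω _ => ?_
  by_cases hx : X ω = x
  · simp [hx]
  · rw [if_neg hx]
    exact ite_nonneg (hp ω) le_rfl

lemma sum_mul_comp_eq_sum_pr_mul [Fintype α] (p : Ω → ℝ) (X : Ω → α) (g : α → ℝ) :
    ∑ ω, p ω * g (X ω) = ∑ x, pr p X x * g x := by
  simp only [pr, sum_mul, ite_mul, zero_mul]
  rw [sum_comm]
  simp

lemma sum_pr [Fintype α] (p : Ω → ℝ) (X : Ω → α) : ∑ x, pr p X x = ∑ ω, p ω := by
  simpa using (sum_mul_comp_eq_sum_pr_mul p X 1).symm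

lemma pr_comp [Fintype α] (p : Ω → ℝ) (X : Ω → α) (f : α → β) (y : β) :
    pr p (fun ω => f (X ω)) y = ∑ x with f x = y, pr p X x := by
  simpa [pr, sum_filter] using sum_mul_comp_eq_sum_pr_mul p X fun x => if f x = y then 1 else 0

end Probability

section Entropy

variable {α β γ δ : Type} [Fintype α] [DecidableEq α] [Fintype β] [DecidableEq β]
  [Fintype γ] [DecidableEq γ] [Fintype δ] [DecidableEq δ] {p : Ω → ℝ}

lemma ent_eq_neg_sum_mul_log (p : Ω → ℝ) (X : Ω → α) :
    ent p X = -∑ ω, p ω * log (pr p X (X ω)) := by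
  rw [sum_mul_comp_eq_sum_pr_mul p X fun x => log (pr p X x)]
  simp [ent, negMulLog]

lemma ent_comp_of_injective (p : Ω → ℝ) (X : Ω → α) {f : α → β} (hf : f.Injective) :
    ent p (fun ω => f (X ω)) = ent p X := by
  simp only [ent_eq_neg_sum_mul_log, pr, hf.eq_iff]

lemma ent_comp_le (hp : ∀ ω, 0 ≤ p ω) (X : Ω → α) (f : α → β) :
    ent p (fun ω => f (X ω)) ≤ ent p X := by
  rw [ent_eq_neg_sum_mul_log, ent_eq_neg_sum_mul_log, neg_le_neg_iff]
  refine sum_le_sum fun ω _ => ?_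
  rcases (hp ω).eq_or_lt with hω | hω
  · simp [← hω]
  · exact mul_le_mul_of_nonneg_left
      (log_le_log (pr_apply_pos hp X hω) (pr_le_pr_comp hp X f (X ω))) hω.le

lemma mi_comp_left_of_injective (p : Ω → ℝ) (X : Ω → α) (Y : Ω → γ) {f : α → β}
    (hf : f.Injective) : mi p (fun ω => f (X ω)) Y = mi p X Y := by
  have hpair : ent p (fun ω => (f (X ω), Y ω)) = ent p (fun ω => (X ω, Y ω)) :=
    ent_comp_of_injective p (fun ω => (X ω, Y ω)) (hf.prodMap Function.injective_id)
  rw [mi, mi, ent_comp_of_injective p X hf, hpair]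

lemma mi_prodAssoc_left (p : Ω → ℝ) (X : Ω → α) (Y : Ω → β) (Z : Ω → γ) (T : Ω → δ) :
    mi p (fun ω => (X ω, Y ω, Z ω)) T = mi p (fun ω => ((X ω, Y ω), Z ω)) T :=
  mi_comp_left_of_injective p (fun ω => ((X ω, Y ω), Z ω)) T
    (f := fun z => (z.1.1, z.1.2, z.2)) (Equiv.prodAssoc α β γ).injective

end Entropy

section Gibbs

lemma sum_mul_log_le_sum_mul_log_self {ι : Type*} {s : Finset ι} {a b : ι → ℝ}
    (ha : ∀ i ∈ s, 0 ≤ a i) (hb : ∀ i ∈ s, 0 ≤ b i) (hab : ∀ i ∈ s, b i = 0 → a i = 0)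
    (hsum : ∑ i ∈ s, b i ≤ ∑ i ∈ s, a i) :
    ∑ i ∈ s, a i * log (b i) ≤ ∑ i ∈ s, a i * log (a i) := by
  have hterm : ∀ i ∈ s, a i * log (b i) - a i * log (a i) ≤ b i - a i := by
    intro i hi
    rcases (ha i hi).eq_or_lt with hai | hai
    · simpa [← hai] using hb i hi
    have hbi : 0 < b i := (hb i hi).lt_of_ne' fun h => hai.ne' (hab i hi h)
    calc a i * log (b i) - a i * log (a i) = a i * log (b i / a i) := by
          rw [log_div hbi.ne' hai.ne', mul_sub]
      _ ≤ a i * (b i / a i - 1) :=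
          mul_le_mul_of_nonneg_left (log_le_sub_one_of_pos (div_pos hbi hai)) hai.le
      _ = b i - a i := by rw [mul_sub, mul_div_cancel₀ _ hai.ne', mul_one]
  have h := sum_le_sum hterm
  simp only [sum_sub_distrib] at h
  linarith

variable {α β : Type} [Fintype α] [DecidableEq α] [Fintype β] [DecidableEq β] {p : Ω → ℝ}

lemma ent_le_neg_sum_pr_mul_log (hp : ∀ ω, 0 ≤ p ω) (X : Ω → α) {b : α → ℝ}
    (hb : ∀ x, 0 ≤ b x) (hpb : ∀ x, b x = 0 → pr p X x = 0) (hsum : ∑ x, b x ≤ ∑ ω, p ω) :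
    ent p X ≤ -∑ x, pr p X x * log (b x) := by
  have hgibbs := sum_mul_log_le_sum_mul_log_self (s := univ) (fun x _ => pr_nonneg hp X x)
    (fun x _ => hb x) (fun x _ => hpb x) (hsum.trans_eq (sum_pr p X).symm)
  simpa [ent, negMulLog] using hgibbs

lemma ent_le_log_card (hp : IsPMF p) (X : Ω → α) : ent p X ≤ log (Fintype.card α) := by
  have hcard (x : α) : (Fintype.card α : ℝ)⁻¹ ≠ 0 :=
    inv_ne_zero (Nat.cast_ne_zero.2 (Fintype.card_pos_iff.2 ⟨x⟩).ne')
  have h := ent_le_neg_sum_pr_mul_log hp.1 X (b := fun _ => (Fintype.card α : ℝ)⁻¹)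
    (fun _ => by positivity) (fun x hx => absurd hx (hcard x))
    (by simpa [hp.2] using mul_inv_le_one)
  simpa [← sum_mul, sum_pr, hp.2] using h

lemma sum_mul_log_pr_mul_pr (hp : ∀ ω, 0 ≤ p ω) (X : Ω → α) (Y : Ω → β) :
    ∑ ω, p ω * log (pr p X (X ω) * pr p Y (Y ω)) = -(ent p X + ent p Y) := by
  rw [ent_eq_neg_sum_mul_log p X, ent_eq_neg_sum_mul_log p Y, ← neg_add, neg_neg,
    ← sum_add_distrib]
  refine sum_congr rfl fun ω _ => ?_
  rcases (hp ω).eq_or_lt with hω | hω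
  · simp [← hω]
  · rw [log_mul (pr_apply_pos hp X hω).ne' (pr_apply_pos hp Y hω).ne', mul_add]

lemma ent_prodMk_le (hp : IsPMF p) (X : Ω → α) (Y : Ω → β) :
    ent p (fun ω => (X ω, Y ω)) ≤ ent p X + ent p Y := by
  let b : α × β → ℝ := fun z => pr p X z.1 * pr p Y z.2
  have hb (z : α × β) : 0 ≤ b z := mul_nonneg (pr_nonneg hp.1 X _) (pr_nonneg hp.1 Y _)
  have hpb (z : α × β) (hz : b z = 0) : pr p (fun ω => (X ω, Y ω)) z = 0 := by
    refine le_antisymm ?_ (pr_nonneg hp.1 _ z)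
    rcases mul_eq_zero.1 hz with hX | hY
    · exact (pr_le_pr_comp hp.1 _ Prod.fst z).trans_eq hX
    · exact (pr_le_pr_comp hp.1 _ Prod.snd z).trans_eq hY
  have hsum : ∑ z, b z = ∑ ω, p ω := by
    simp only [b, Fintype.sum_prod_type, ← mul_sum, sum_pr, hp.2, mul_one]
  calc ent p (fun ω => (X ω, Y ω)) ≤ -∑ z, pr p (fun ω => (X ω, Y ω)) z * log (b z) :=
        ent_le_neg_sum_pr_mul_log hp.1 _ hb hpb hsum.le
    _ = -∑ ω, p ω * log (pr p X (X ω) * pr p Y (Y ω)) := by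
        rw [← sum_mul_comp_eq_sum_pr_mul p (fun ω => (X ω, Y ω)) fun z => log (b z)]
    _ = ent p X + ent p Y := by rw [sum_mul_log_pr_mul_pr hp.1, neg_neg]

lemma mi_nonneg (hp : IsPMF p) (X : Ω → α) (Y : Ω → β) : 0 ≤ mi p X Y :=
  sub_nonneg.2 (ent_prodMk_le hp X Y)

end Gibbs

namespace IndepRV

variable {α β γ : Type} [Fintype α] [DecidableEq α] [Fintype β] [DecidableEq β]
  [Fintype γ] [DecidableEq γ] {p : Ω → ℝ} {X : Ω → α} {Y : Ω → β}

lemma ent_prodMk (h : IndepRV p X Y) (hp : ∀ ω, 0 ≤ p ω) :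
    ent p (fun ω => (X ω, Y ω)) = ent p X + ent p Y := by
  rw [ent_eq_neg_sum_mul_log]
  simp only [h _ _, sum_mul_log_pr_mul_pr hp, neg_neg]

lemma mi_add_mi_le_ent (h : IndepRV p X Y) (hp : ∀ ω, 0 ≤ p ω) (Z : Ω → γ) :
    mi p (fun ω => (X ω, Z ω)) Y + mi p X Z ≤ ent p Z := by
  have hle : ent p X + ent p Y ≤ ent p (fun ω => ((X ω, Z ω), Y ω)) :=
    (h.ent_prodMk hp).symm.trans_le
      (ent_comp_le hp (fun ω => ((X ω, Z ω), Y ω)) fun z => (z.1.1, z.2))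
  rw [mi, mi]
  linarith

end IndepRV

lemma sum_filter_apply_eq_prod {ι : Type*} [Fintype ι] [DecidableEq ι] {α : ι → Type*}
    [∀ i, Fintype (α i)] [∀ i, DecidableEq (α i)] (q : ∀ i, α i → ℝ) (i : ι) (x : α i) :
    ∑ v : ∀ j, α j with v i = x, ∏ j, q j (v j) = q i x * ∏ j ∈ univ \ {i}, ∑ a, q j a := by
  rw [← Fintype.piFinset_univ, ← Fintype.piFinset_update_singleton_eq_filter_piFinset_eq
    (fun j => (univ : Finset (α j))) i (mem_univ x), ← prod_univ_sum]
  simp_rw [Function.apply_update (fun j (s : Finset (α j)) => ∑ a ∈ s, q j a)]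
  rw [prod_update_of_mem (mem_univ i), sum_singleton]

namespace IIndepRV

variable {ι : Type} [Fintype ι] {α : ι → Type} [∀ i, DecidableEq (α i)]
  {p : Ω → ℝ} {X : Ω → ∀ i, α i}

-- The marginals are `q i / ∑ a, q i a`, and their denominators multiply to one.
lemma of_pr_eq_prod [∀ i, Finite (α i)] (hp : ∑ ω, p ω = 1) (q : ∀ i, α i → ℝ)
    (hq : ∀ v, pr p X v = ∏ i, q i (v i)) : IIndepRV p X := by
  classical
  have (i : ι) : Fintype (α i) := Fintype.ofFinite (α i)
  have hmass : ∏ j, ∑ a, q j a = 1 := by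
    rw [prod_univ_sum, Fintype.piFinset_univ, ← hp, ← sum_pr p X]
    exact sum_congr rfl fun v _ => (hq v).symm
  have hmarginal (i : ι) (x : α i) : pr p (fun ω => X ω i) x = q i x * (∑ a, q i a)⁻¹ := by
    rw [pr_comp p X (fun v => v i) x, sum_congr rfl fun v _ => hq v, sum_filter_apply_eq_prod]
    congr 1
    refine eq_inv_of_mul_eq_one_right ?_
    rw [← hmass, sdiff_singleton_eq_erase,
      mul_prod_erase univ (fun j => ∑ a, q j a) (mem_univ i)]
  intro v
  simp_rw [hmarginal, prod_mul_distrib, prod_inv_distrib, hmass, inv_one, mul_one]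
  exact hq v

lemma ent_eq_sum [DecidableEq ι] [∀ i, Fintype (α i)] (h : IIndepRV p X) (hp : ∀ ω, 0 ≤ p ω) :
    ent p X = ∑ i, ent p (fun ω => X ω i) := by
  simp only [ent_eq_neg_sum_mul_log, sum_neg_distrib]
  rw [sum_comm]
  congr 1
  refine sum_congr rfl fun ω _ => ?_
  rcases (hp ω).eq_or_lt with hω | hω
  · simp [← hω]
  · rw [h, log_prod fun i _ => (pr_apply_pos hp (fun ω => X ω i) hω).ne', mul_sum]

end IIndepRV

section ChainRule

variable {β : Type} [Fintype β] [DecidableEq β] {n : ℕ} {α : Fin n → Type} [∀ i, Fintype (α i)]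
  [∀ i, DecidableEq (α i)] {p : Ω → ℝ}

lemma sum_mi_take_eq_ent (p : Ω → ℝ) (T : Ω → β) (X : Ω → ∀ i, α i) :
    ∑ i : Fin n, mi p (fun ω => (T ω, Fin.take i i.is_lt.le (X ω))) (fun ω => X ω i) =
      ent p T + ∑ i, ent p (fun ω => X ω i) - ent p (fun ω => (T ω, X ω)) := by
  induction n with
  | zero =>
    have hT : ent p (fun ω => (T ω, X ω)) = ent p T :=
      (ent_comp_of_injective p (fun ω => (T ω, X ω)) (f := Prod.fst) fun _ _ h =>
        Prod.ext h (Subsingleton.elim _ _)).symm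
    simp [hT]
  | succ n ih =>
    have hsplit : ent p (fun ω => ((T ω, Fin.init (X ω)), X ω (Fin.last n))) =
        ent p (fun ω => (T ω, X ω)) := by
      refine ent_comp_of_injective p (fun ω => (T ω, X ω))
        (f := fun z => ((z.1, Fin.init z.2), z.2 (Fin.last n))) fun z z' h => ?_
      obtain ⟨⟨hT, hinit⟩, hlast⟩ := by simpa only [Prod.mk.injEq] using h
      refine Prod.ext hT ?_
      rw [← Fin.snoc_init_self z.2, hinit, hlast, Fin.snoc_init_self]
    have hinit :
        ∑ i : Fin n, mi p (fun ω => (T ω, Fin.take i.castSucc i.castSucc.is_lt.le (X ω)))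
            (fun ω => X ω i.castSucc) =
          ent p T + ∑ i : Fin n, ent p (fun ω => X ω i.castSucc) -
            ent p (fun ω => (T ω, Fin.init (X ω))) :=
      ih fun ω => Fin.init (X ω)
    have hlast :
        mi p (fun ω => (T ω, Fin.take (Fin.last n) (Fin.last n).is_lt.le (X ω)))
            (fun ω => X ω (Fin.last n)) =
          ent p (fun ω => (T ω, Fin.init (X ω))) + ent p (fun ω => X ω (Fin.last n)) -
            ent p (fun ω => (T ω, X ω)) := by
      rw [← hsplit]
      rfl
    rw [Fin.sum_univ_castSucc, Fin.sum_univ_castSucc]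
    linear_combination hinit + hlast

lemma IIndepRV.sum_mi_take_eq_mi {X : Ω → ∀ i, α i} (h : IIndepRV p X) (hp : ∀ ω, 0 ≤ p ω)
    (T : Ω → β) :
    ∑ i : Fin n, mi p (fun ω => (T ω, Fin.take i i.is_lt.le (X ω))) (fun ω => X ω i) =
      mi p T X := by
  rw [sum_mi_take_eq_ent, ← h.ent_eq_sum hp, mi]

end ChainRule

theorem stmt5_general {n : ℕ} {α : Fin n → Type} [∀ i, Fintype (α i)] [∀ i, DecidableEq (α i)]
    {𝒮 𝒲 : Type} [Fintype 𝒮] [DecidableEq 𝒮] [Fintype 𝒲] [DecidableEq 𝒲]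
    {p : Ω → ℝ} (hp : IsPMF p) {X : Ω → ∀ i, α i} (hX : IIndepRV p X)
    {S : Ω → 𝒮} (hind : IndepRV p S X) (W : Ω → 𝒲) :
    ent p W ≥ mi p (fun ω => (S ω, W ω)) X + mi p S W ∧
    log (Fintype.card 𝒲) ≥
      ∑ i : Fin n, mi p (fun ω => (S ω, W ω, Fin.take i i.is_lt.le (X ω))) (fun ω => X ω i) := by
  have hstorage := hind.mi_add_mi_le_ent hp.1 W
  refine ⟨hstorage, ?_⟩
  calc ∑ i : Fin n, mi p (fun ω => (S ω, W ω, Fin.take i i.is_lt.le (X ω))) (fun ω => X ω i)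
      = ∑ i : Fin n,
          mi p (fun ω => ((S ω, W ω), Fin.take i i.is_lt.le (X ω))) (fun ω => X ω i) :=
        sum_congr rfl fun i _ => mi_prodAssoc_left p S W _ _
    _ = mi p (fun ω => (S ω, W ω)) X := hX.sum_mi_take_eq_mi hp.1 _
    _ ≤ mi p (fun ω => (S ω, W ω)) X + mi p S W := le_add_of_nonneg_right (mi_nonneg hp S W)
    _ ≤ ent p W := hstorage
    _ ≤ log (Fintype.card 𝒲) := ent_le_log_card hp W

/-- Storage-rate converse bound (25) for the chosen-secret model. -/
theorem stmt5 {α 𝒮 𝒲 : Type} [Fintype α] [DecidableEq α]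
    [Fintype 𝒮] [DecidableEq 𝒮] [Fintype 𝒲] [DecidableEq 𝒲]
    (n : ℕ) (p : Ω → ℝ) (hp : IsPMF p)
    (Xt : Ω → Fin n → α) (S : Ω → 𝒮) (W : Ω → 𝒲)
    (q : α → ℝ) (hiid : ∀ v : Fin n → α, pr p Xt v = ∏ i, q (v i))
    (hind : IndepRV p S Xt) :
    ent p W ≥ mi p (fun ω => (S ω, W ω)) Xt + mi p S W ∧
    Real.log (Fintype.card 𝒲) ≥
      ∑ i : Fin n,
        mi p (fun ω => (S ω, W ω, fun j : Fin i.val => Xt ω ⟨j.1, j.2.trans i.isLt⟩))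
          (fun ω => Xt ω i) :=
  stmt5_general hp (IIndepRV.of_pr_eq_prod hp.2 (fun _ => q) hiid) hind W
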